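/- Let v: ℝ^d → ℝ^d be v(e) = (e_1 |e_1|^{q−2}, …, e_d |e_d|^{q−2}), fix Borel, F_n-measurable versions g_n of E_μ[𝔻_n f(X) | F_n], set Φ = (Φ_1, …, Φ_N) with Φ_n = v(g_n), write r = ‖ᵒ𝔻f‖_{L^q(μ)}, and fix u > 0. For δ > 0 let π_δ = (Id, Id + u δ Δ^{−1} ∘ Φ)_# μ. Then π_δ ∈ Π_c(μ, *), E_{π_δ}[c_N(X, Y)] = u^p r^q δ^p, and lim_{δ→0+} E_{π_δ}[f(Y) − f(X)]/δ = u r^q. -/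

import Mathlib

open MeasureTheory Filter Set
open scoped ENNReal

noncomputable section

/-- Discrete path space `X = (ℝ^d)^N`. -/
abbrev PathD (N d : ℕ) : Type := Fin N → Fin d → ℝ

/-- The `ℓ_e` norm on `ℝ^d`. -/
def lpnorm {d : ℕ} (e : ℝ) (v : Fin d → ℝ) : ℝ := (∑ i, |v i| ^ e) ^ (1 / e)

/-- Coordinate `x_n` of a path, with the convention `x_0 = 0` (and `x_n = 0` for `n > N`). -/
def coord {N d : ℕ} (x : PathD N d) (n : ℕ) : Fin d → ℝ :=
  if h : 1 ≤ n ∧ n ≤ N then x ⟨n - 1, by omega⟩ else 0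

/-- The cost `c_N(x,y) = Σ_{n=1}^N |Δx_n − Δy_n|^p` (with `|·|` the `ℓ_p` norm). -/
def cN {N d : ℕ} (p : ℝ) (x y : PathD N d) : ℝ :=
  ∑ n ∈ Finset.Icc 1 N,
    lpnorm p ((coord x n - coord x (n - 1)) - (coord y n - coord y (n - 1))) ^ p

/-- The σ-algebra `F_n = σ(x_1, …, x_n)` on the discrete path space. -/
def Fn (N d n : ℕ) : MeasurableSpace (PathD N d) :=
  MeasurableSpace.comap (fun x (i : Fin N) => if (i : ℕ) + 1 ≤ n then x i else 0) inferInstance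

/-- Conditional independence of `m₁` and `m₂` given `m'` under `π`, expressed through
conditional expectations of indicators. -/
def CondIndepOn {Ω : Type*} [MeasurableSpace Ω] (π : Measure Ω)
    (m' m₁ m₂ : MeasurableSpace Ω) : Prop :=
  ∀ A B : Set Ω, MeasurableSet[m₁] A → MeasurableSet[m₂] B →
    (π[(A ∩ B).indicator (fun _ => (1 : ℝ)) | m']) =ᵐ[π]
      (π[A.indicator (fun _ => (1 : ℝ)) | m']) * (π[B.indicator (fun _ => (1 : ℝ)) | m'])

/-- `π` is a coupling with first marginal `μ` which is causal to its second marginal: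
for every `n`, `σ(Y_1,…,Y_n)` is conditionally independent of `σ(X_1,…,X_N)` given `F_n`. -/
def IsCausalStar {N d : ℕ} (μ : Measure (PathD N d))
    (π : Measure (PathD N d × PathD N d)) : Prop :=
  π.map Prod.fst = μ ∧
  ∀ n : ℕ, CondIndepOn π ((Fn N d n).comap Prod.fst)
    ((Fn N d n).comap Prod.snd) ((Fn N d N).comap Prod.fst)

/-- `π` is a causal coupling of `(μ, ν)`. -/
def IsCausalCoupling {N d : ℕ} (μ ν : Measure (PathD N d))
    (π : Measure (PathD N d × PathD N d)) : Prop :=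
  π.map Prod.snd = ν ∧ IsCausalStar μ π

/-- `π` is a bicausal coupling of `(μ, ν)`: both `π` and its swap are causal. -/
def IsBicausalCoupling {N d : ℕ} (μ ν : Measure (PathD N d))
    (π : Measure (PathD N d × PathD N d)) : Prop :=
  IsCausalCoupling μ ν π ∧
  (∀ n : ℕ, CondIndepOn π ((Fn N d n).comap Prod.snd)
    ((Fn N d n).comap Prod.fst) ((Fn N d N).comap Prod.snd))

/-- `μ` is a martingale measure on the discrete path space: every coordinate is integrable
and `E_μ[X_n | F_{n−1}] = X_{n−1}` a.s. (with `X_0 = 0`). -/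
def IsMartingaleMeasure {N d : ℕ} (μ : Measure (PathD N d)) : Prop :=
  ∀ n : ℕ, 1 ≤ n → n ≤ N →
    Integrable (fun x => coord x n) μ ∧
    (μ[(fun x => coord x n) | Fn N d (n - 1)]) =ᵐ[μ] (fun x => coord x (n - 1))


/-- The discrete pathwise Malliavin derivative `𝔻_n f = Σ_{k=n}^N ∂_k f`, where `∂_k f` is the
`ℝ^d`-valued partial gradient of `f` in the `k`-th coordinate block (`k = 1, …, N`). -/
def Dn {N d : ℕ} (f : PathD N d → ℝ) (n : ℕ) (x : PathD N d) : Fin d → ℝ :=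
  fun j => ∑ k : Fin N, if n ≤ (k : ℕ) + 1 then
    fderiv ℝ f x (Pi.single k (Pi.single j 1)) else 0

/-- Standing assumptions on the penalty function `L : [0,∞) → [0,∞]`:
continuous, non-decreasing, `L(0) = 0` and `liminf_{u→∞} L(u)/u^p = +∞`. -/
structure PenaltyAssumptions (p : ℝ) (L : ℝ → ℝ≥0∞) : Prop where
  cont : ContinuousOn L (Set.Ici 0)
  mono : MonotoneOn L (Set.Ici 0)
  zero : L 0 = 0
  growth : Tendsto (fun u : ℝ => L u / ENNReal.ofReal (u ^ p)) atTop (nhds ⊤)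

/-- The convex conjugate `L*(v) = sup_{u ≥ 0} { u v − L(u) }`, valued in the extended reals. -/
def Lconj (L : ℝ → ℝ≥0∞) (v : ℝ) : EReal :=
  ⨆ u : {u : ℝ // 0 ≤ u}, ((u.1 * v : ℝ) : EReal) - ((L u.1 : ℝ≥0∞) : EReal)

/-- The expected transport cost `E_π[c_N(X,Y)]` of a coupling. -/
def costD {N d : ℕ} (p : ℝ) (π : Measure (PathD N d × PathD N d)) : ℝ :=
  ∫ z, cN p z.1 z.2 ∂π

/-- The penalised causal DRO value
`V(δ) = sup_{π ∈ Π_c(μ,*), E_π[c_N] < ∞} { E_π[f(Y)] − δ L(E_π[c_N(X,Y)]^{1/p}/δ) }`,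
valued in the extended reals. -/
def VD {N d : ℕ} (p : ℝ) (L : ℝ → ℝ≥0∞) (μ : Measure (PathD N d))
    (f : PathD N d → ℝ) (δ : ℝ) : EReal :=
  ⨆ π : {π : Measure (PathD N d × PathD N d) //
      IsProbabilityMeasure π ∧ IsCausalStar μ π ∧
      Integrable (fun z => cN p z.1 z.2) π},
    ((∫ z, f z.2 ∂π.1 : ℝ) : EReal) -
      ((ENNReal.ofReal δ * L ((costD p π.1) ^ (1 / p) / δ) : ℝ≥0∞) : EReal)

/-- The `L^q(μ)`-norm `(Σ_{n=1}^N E_μ[|E_μ[𝔻_n f(X)|F_n]|_*^q])^{1/q}` of the optional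
projection of the discrete pathwise Malliavin derivative. -/
def optionalNorm {N d : ℕ} (q : ℝ) (μ : Measure (PathD N d)) (f : PathD N d → ℝ) : ℝ :=
  (∑ n ∈ Finset.Icc 1 N, ∫ x, lpnorm q ((μ[Dn f n | Fn N d n]) x) ^ q ∂μ) ^ (1 / q)

/-- The map `v(e) = (e_1|e_1|^{q−2}, …, e_d|e_d|^{q−2})` on `ℝ^d`. -/
def vmap {d : ℕ} (q : ℝ) (e : Fin d → ℝ) : Fin d → ℝ :=
  fun i => e i * |e i| ^ (q - 2)

/-- The inverse `Δ^{-1}` of the increment map: `(Δ^{-1} y)_n = Σ_{k=1}^n y_k`. -/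
def DeltaInv {N d : ℕ} (y : PathD N d) : PathD N d :=
  fun i => ∑ k : Fin N, if (k : ℕ) ≤ (i : ℕ) then y k else 0

/-- A process `h = (h_n)_{n=1}^N` is predictable if `h_n` is `F_{n−1}`-measurable. -/
def IsPredictable {N d : ℕ} (h : ℕ → PathD N d → Fin d → ℝ) : Prop :=
  ∀ n : ℕ, 1 ≤ n → n ≤ N → Measurable[Fn N d (n - 1)] (h n)

end

open MeasureTheory Filter

/-!
Moving the path along `Δ⁻¹ Φ` changes `f` at first order by `Σ_n ⟨Φ_n, 𝔻_n f⟩`: this is summation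
by parts, and it is the reason why `𝔻_n f` is a tail sum of gradients. If `Φ` is adapted, taking
expectations replaces `𝔻_n f` by its optional projection `g_n`. The choice `Φ_n = v(g_n)` is the
equality case of Hölder's inequality, `⟨v(g_n), g_n⟩ = |g_n|_*^q = |v(g_n)|^p`, so that the slope of
`E f` and the transport cost are both read off from `Σ_n E |g_n|_*^q = r^q`. Causality holds because
`Y` is an adapted function of `X`: up to null sets, an event of `σ(Y_1, …, Y_n)` is in `F_n`.
-/

section

open scoped Topology

/-! ### Norms and the duality map on `ℝ^d` -/

section Norm

variable {d : ℕ} {e p q : ℝ}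

theorem lpnorm_nonneg (e : ℝ) (v : Fin d → ℝ) : 0 ≤ lpnorm e v := by
  unfold lpnorm
  positivity

theorem lpnorm_rpow_eq_sum (he : e ≠ 0) (v : Fin d → ℝ) : lpnorm e v ^ e = ∑ i, |v i| ^ e := by
  rw [lpnorm, ← Real.rpow_mul (by positivity), one_div_mul_cancel he, Real.rpow_one]

theorem lpnorm_smul_rpow (he : e ≠ 0) (c : ℝ) (v : Fin d → ℝ) :
    lpnorm e (c • v) ^ e = |c| ^ e * lpnorm e v ^ e := by
  simp_rw [lpnorm_rpow_eq_sum he, Finset.mul_sum, Pi.smul_apply, smul_eq_mul, abs_mul,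
    Real.mul_rpow (abs_nonneg _) (abs_nonneg _)]

theorem abs_apply_le_lpnorm (he : 0 < e) (v : Fin d → ℝ) (i : Fin d) : |v i| ≤ lpnorm e v := by
  rw [← Real.rpow_le_rpow_iff (abs_nonneg _) (lpnorm_nonneg e v) he, lpnorm_rpow_eq_sum he.ne']
  exact Finset.single_le_sum (f := fun i => |v i| ^ e) (fun i _ => by positivity)
    (Finset.mem_univ i)

theorem norm_le_lpnorm (he : 0 < e) (v : Fin d → ℝ) : ‖v‖ ≤ lpnorm e v :=
  (pi_norm_le_iff_of_nonneg (lpnorm_nonneg e v)).2 (abs_apply_le_lpnorm he v)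

theorem measurable_lpnorm (e : ℝ) : Measurable (lpnorm e : (Fin d → ℝ) → ℝ) := by
  unfold lpnorm
  fun_prop

theorem measurable_vmap (q : ℝ) : Measurable (vmap q : (Fin d → ℝ) → Fin d → ℝ) := by
  unfold vmap
  fun_prop

theorem abs_vmap_apply_rpow (hpq : p.HolderConjugate q) (v : Fin d → ℝ) (i : Fin d) :
    |vmap q v i| ^ p = |v i| ^ q := by
  have hexp : 1 + (q - 2) = q - 1 := by ring
  have habs : |vmap q v i| = |v i| ^ (q - 1) := by
    rw [vmap, abs_mul, abs_of_nonneg (Real.rpow_nonneg (abs_nonneg _) _), ← hexp,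
      Real.rpow_one_add' (abs_nonneg _) (hexp ▸ hpq.symm.sub_one_ne_zero)]
  rw [habs, ← Real.rpow_mul (abs_nonneg _), hpq.symm.sub_one_mul_conj]

theorem lpnorm_vmap_rpow (hpq : p.HolderConjugate q) (v : Fin d → ℝ) :
    lpnorm p (vmap q v) ^ p = lpnorm q v ^ q := by
  simp_rw [lpnorm_rpow_eq_sum hpq.ne_zero, lpnorm_rpow_eq_sum hpq.symm.ne_zero,
    abs_vmap_apply_rpow hpq]

theorem vmap_dotProduct_self (hq : q ≠ 0) (v : Fin d → ℝ) : vmap q v ⬝ᵥ v = lpnorm q v ^ q := by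
  rw [lpnorm_rpow_eq_sum hq]
  refine Finset.sum_congr rfl fun i _ => ?_
  rcases eq_or_ne (v i) 0 with h | h
  · simp [h, Real.zero_rpow hq]
  · calc vmap q v i * v i = |v i| ^ (q - 2) * |v i| ^ (2 : ℝ) := by
          rw [vmap, Real.rpow_two, sq_abs]
          ring
      _ = |v i| ^ q := by rw [← Real.rpow_add (abs_pos.2 h), sub_add_cancel]

end Norm

/-! ### Increments and the transport cost -/

section Increments

variable {N d : ℕ}

theorem sum_Icc_one_eq_sum_fin {M : Type*} [AddCommMonoid M] (N : ℕ) (F : ℕ → M) :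
    ∑ n ∈ Finset.Icc 1 N, F n = ∑ i : Fin N, F (i + 1) := by
  rw [Fin.sum_univ_eq_sum_range (fun i => F (i + 1)), Finset.range_eq_Ico,
    Finset.sum_Ico_add' F 0 N 1]
  rfl

theorem coord_add (x y : PathD N d) (n : ℕ) : coord (x + y) n = coord x n + coord y n := by
  unfold coord
  split_ifs <;> simp

theorem coord_smul (c : ℝ) (x : PathD N d) (n : ℕ) : coord (c • x) n = c • coord x n := by
  unfold coord
  split_ifs <;> simp

theorem measurable_coord (n : ℕ) : Measurable fun x : PathD N d => coord x n := by
  unfold coord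
  split_ifs <;> fun_prop

theorem coord_deltaInv (y : PathD N d) {n : ℕ} (hn : n ≤ N) :
    coord (DeltaInv y) n = ∑ k : Fin N, if (k : ℕ) < n then y k else 0 := by
  rcases n.eq_zero_or_pos with rfl | hpos
  · simp [coord]
  · rw [coord, dif_pos ⟨hpos, hn⟩]
    simp only [DeltaInv, Nat.le_sub_one_iff_lt hpos]

theorem coord_succ_sub_coord_deltaInv (y : PathD N d) (n : Fin N) :
    coord (DeltaInv y) (n + 1) - coord (DeltaInv y) n = y n := by
  rw [coord_deltaInv y n.isLt, coord_deltaInv y n.isLt.le, ← Finset.sum_sub_distrib,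
    Finset.sum_eq_single_of_mem n (Finset.mem_univ n)]
  · simp
  · intro k _ hk
    have hlt : (k : ℕ) < n + 1 ↔ (k : ℕ) < n := by have := Fin.val_ne_of_ne hk; omega
    simp only [hlt, sub_self]

theorem measurable_cN (p : ℝ) : Measurable fun z : PathD N d × PathD N d => cN p z.1 z.2 := by
  have hfst (n : ℕ) : Measurable fun z : PathD N d × PathD N d => coord z.1 n :=
    (measurable_coord n).comp measurable_fst
  have hsnd (n : ℕ) : Measurable fun z : PathD N d × PathD N d => coord z.2 n :=
    (measurable_coord n).comp measurable_snd
  exact Finset.measurable_sum _ fun n _ => ((measurable_lpnorm p).comp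
    (((hfst n).sub (hfst (n - 1))).sub ((hsnd n).sub (hsnd (n - 1))))).pow_const p

theorem cN_add_smul_deltaInv {p : ℝ} (hp : p ≠ 0) (c : ℝ) (x y : PathD N d) :
    cN p x (x + c • DeltaInv y) = |c| ^ p * ∑ n, lpnorm p (y n) ^ p := by
  rw [cN, sum_Icc_one_eq_sum_fin, Finset.mul_sum]
  refine Finset.sum_congr rfl fun n _ => ?_
  have hincr : coord x (n + 1) - coord x n -
      (coord (x + c • DeltaInv y) (n + 1) - coord (x + c • DeltaInv y) n) = -c • y n := by
    rw [← coord_succ_sub_coord_deltaInv y n]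
    simp only [coord_add, coord_smul]
    module
  rw [Nat.add_sub_cancel, hincr, lpnorm_smul_rpow hp, abs_neg]

end Increments

/-! ### The pathwise derivative -/

section Derivative

variable {N d : ℕ}

/-- The partial gradients of `f` at `x`, one block for each time: `blockGrad f x k` is the paper's
`∂_{k+1} f(x)`, since `Fin N` starts at `0`. -/
noncomputable def blockGrad (f : PathD N d → ℝ) (x : PathD N d) : PathD N d :=
  fun k j => fderiv ℝ f x (Pi.single k (Pi.single j 1))

theorem fderiv_apply_eq_sum_blockGrad (f : PathD N d → ℝ) (x h : PathD N d) :
    fderiv ℝ f x h = ∑ k, h k ⬝ᵥ blockGrad f x k := by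
  have hbasis : h = ∑ k, ∑ j, h k j • (Pi.single k (Pi.single j 1) : PathD N d) := by
    ext k j
    simp [Finset.sum_apply, Pi.single_apply, Finset.sum_ite_eq, ite_apply]
  conv_lhs => rw [hbasis]
  simp only [map_sum, map_smul, smul_eq_mul, dotProduct, blockGrad]

theorem Dn_eq_sum_blockGrad (f : PathD N d → ℝ) (n : ℕ) (x : PathD N d) :
    Dn f n x = ∑ k : Fin N, if n ≤ k + 1 then blockGrad f x k else 0 := by
  ext j
  simp only [Dn, blockGrad, Finset.sum_apply, ite_apply, Pi.zero_apply]

theorem blockGrad_eq_Dn_sub_Dn (f : PathD N d → ℝ) (x : PathD N d) (k : Fin N) :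
    blockGrad f x k = Dn f (k + 1) x - Dn f (k + 2) x := by
  rw [Dn_eq_sum_blockGrad, Dn_eq_sum_blockGrad, ← Finset.sum_sub_distrib,
    Finset.sum_eq_single_of_mem k (Finset.mem_univ k)]
  · simp
  · intro l _ hl
    have hle : (k : ℕ) + 1 ≤ l + 1 ↔ (k : ℕ) + 2 ≤ l + 1 := by
      have := Fin.val_ne_of_ne hl
      omega
    simp only [hle, sub_self]

theorem fderiv_deltaInv (f : PathD N d → ℝ) (x y : PathD N d) :
    fderiv ℝ f x (DeltaInv y) = ∑ n : Fin N, y n ⬝ᵥ Dn f (n + 1) x := by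
  simp only [fderiv_apply_eq_sum_blockGrad, DeltaInv, Dn_eq_sum_blockGrad, sum_dotProduct,
    dotProduct_sum, add_le_add_iff_right]
  rw [Finset.sum_comm]
  refine Finset.sum_congr rfl fun n _ => Finset.sum_congr rfl fun k _ => ?_
  split_ifs <;> simp

theorem norm_fderiv_le_of_lpnorm_Dn_le {f : PathD N d → ℝ} {x : PathD N d} {q B : ℝ} (hq : 0 < q)
    (hB : ∀ n : ℕ, lpnorm q (Dn f n x) ≤ B) : ‖fderiv ℝ f x‖ ≤ N * d * 2 * B := by
  have hB0 : 0 ≤ B := (lpnorm_nonneg _ _).trans (hB 0)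
  have hgrad (k : Fin N) (j : Fin d) : ‖blockGrad f x k j‖ ≤ 2 * B := by
    rw [blockGrad_eq_Dn_sub_Dn, two_mul]
    exact (norm_sub_le _ _).trans (add_le_add ((abs_apply_le_lpnorm hq _ j).trans (hB _))
      ((abs_apply_le_lpnorm hq _ j).trans (hB _)))
  refine ContinuousLinearMap.opNorm_le_bound _ (by positivity) fun h => ?_
  calc ‖fderiv ℝ f x h‖ = ‖∑ k, ∑ j, h k j * blockGrad f x k j‖ := by
        rw [fderiv_apply_eq_sum_blockGrad]
        rfl
    _ ≤ ∑ k : Fin N, ∑ j : Fin d, ‖h‖ * (2 * B) := by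
        refine norm_sum_le_of_le _ fun k _ => norm_sum_le_of_le _ fun j _ => ?_
        rw [norm_mul]
        gcongr
        · exact (norm_le_pi_norm (h k) j).trans (norm_le_pi_norm h k)
        · exact hgrad k j
    _ = N * d * 2 * B * ‖h‖ := by
        simp only [Finset.sum_const, Finset.card_univ, Fintype.card_fin, nsmul_eq_mul]
        ring

theorem measurable_Dn (f : PathD N d → ℝ) (n : ℕ) : Measurable (Dn f n) := by
  refine measurable_pi_iff.2 fun j => Finset.measurable_sum _ fun k _ => ?_
  split_ifs
  · exact measurable_fderiv_apply_const ℝ f _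
  · exact measurable_const

end Derivative

/-! ### Adapted processes and causality -/

section Causality

variable {N d : ℕ}

theorem measurable_Fn_apply {n : ℕ} {i : Fin N} (h : (i : ℕ) + 1 ≤ n) :
    Measurable[Fn N d n] fun x : PathD N d => x i := by
  have hcomp := (measurable_pi_apply (X := fun _ : Fin N => Fin d → ℝ) i).comp
    (comap_measurable
      (fun (x : PathD N d) (i : Fin N) => if (i : ℕ) + 1 ≤ n then x i else 0))
  simpa only [Function.comp_def, if_pos h] using! hcomp

theorem measurable_Fn_iff {n : ℕ} {Ω : Type*} {m : MeasurableSpace Ω} {T : Ω → PathD N d} :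
    Measurable[m, Fn N d n] T ↔ ∀ i : Fin N, (i : ℕ) + 1 ≤ n → Measurable fun ω => T ω i := by
  refine ⟨fun h i hi => (measurable_Fn_apply hi).comp h, fun h => ?_⟩
  refine measurable_comap_iff.2 (measurable_pi_iff.2 fun i => ?_)
  by_cases hi : (i : ℕ) + 1 ≤ n
  · simpa only [Function.comp_def, if_pos hi] using h i hi
  · simp only [Function.comp_def, if_neg hi]
    exact measurable_const

theorem Fn_mono {n m : ℕ} (h : n ≤ m) : Fn N d n ≤ Fn N d m :=
  fun _ hs => (measurable_Fn_iff (T := id)).2 (fun _ hi => measurable_Fn_apply (hi.trans h)) hs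

theorem Fn_le (N d n : ℕ) : Fn N d n ≤ MeasurableSpace.pi :=
  fun _ hs => (measurable_Fn_iff (T := id)).2 (fun i _ => measurable_pi_apply i) hs

/-- A self-map of path space, read as a process, is adapted. The index `n : Fin N` stands for
the time `n + 1`. -/
def IsAdaptedProcess (Φ : PathD N d → PathD N d) : Prop :=
  ∀ n : Fin N, Measurable[Fn N d (n + 1)] fun x => Φ x n

theorem IsAdaptedProcess.measurable_Fn {Φ : PathD N d → PathD N d} (hΦ : IsAdaptedProcess Φ)
    (n : ℕ) : Measurable[Fn N d n, Fn N d n] Φ :=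
  measurable_Fn_iff.2 fun i hi => (hΦ i).mono (Fn_mono hi) le_rfl

theorem IsAdaptedProcess.measurable {Φ : PathD N d → PathD N d} (hΦ : IsAdaptedProcess Φ) :
    Measurable Φ :=
  measurable_pi_iff.2 fun n => (hΦ n).mono (Fn_le N d _) le_rfl

theorem IsAdaptedProcess.add_smul_deltaInv {Φ : PathD N d → PathD N d} (hΦ : IsAdaptedProcess Φ)
    (c : ℝ) : IsAdaptedProcess fun x => x + c • DeltaInv (Φ x) := by
  intro n
  have hsum : Measurable[Fn N d (n + 1)] fun x => DeltaInv (Φ x) n := by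
    refine Finset.measurable_sum _ fun k _ => ?_
    split_ifs with hk
    · exact (hΦ k).mono (Fn_mono (Nat.succ_le_succ hk)) le_rfl
    · exact measurable_const
  exact (measurable_Fn_apply le_rfl).add (hsum.const_smul c)

theorem condIndepOn_of_forall_ae_eq {Ω : Type*} {m' m₁ m₂ m₀ : MeasurableSpace Ω}
    {π : Measure Ω} [IsFiniteMeasure π] (hm' : m' ≤ m₀) (hm₂ : m₂ ≤ m₀)
    (h : ∀ A, MeasurableSet[m₁] A → ∃ A', MeasurableSet[m'] A' ∧ A =ᵐ[π] A') :
    CondIndepOn π m' m₁ m₂ := by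
  intro A B hA hB
  obtain ⟨A', hA', hAA'⟩ := h A hA
  have hinter : (A ∩ B).indicator (fun _ => (1 : ℝ)) =ᵐ[π]
      A'.indicator (B.indicator fun _ => (1 : ℝ)) := by
    rw [Set.indicator_indicator]
    exact indicator_ae_eq_of_ae_eq_set (hAA'.inter (ae_eq_refl B))
  have hind : A.indicator (fun _ => (1 : ℝ)) =ᵐ[π] A'.indicator (fun _ => (1 : ℝ)) :=
    indicator_ae_eq_of_ae_eq_set hAA'
  have hself : π[A'.indicator (fun _ => (1 : ℝ)) | m'] = A'.indicator (fun _ => (1 : ℝ)) :=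
    condExp_of_stronglyMeasurable hm' (stronglyMeasurable_const.indicator hA')
      ((integrable_const _).indicator (hm' _ hA'))
  have hpull : π[A'.indicator (B.indicator fun _ => (1 : ℝ)) | m'] =ᵐ[π]
      A'.indicator (π[B.indicator (fun _ => (1 : ℝ)) | m']) :=
    condExp_indicator ((integrable_const _).indicator (hm₂ _ hB)) hA'
  filter_upwards [condExp_congr_ae (m := m') hinter, condExp_congr_ae (m := m') hind, hpull]
    with z hz_inter hz_ind hz_pull
  rw [hz_inter, hz_pull, Pi.mul_apply, hz_ind, hself]
  by_cases hz : z ∈ A' <;> simp [hz]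

theorem IsAdaptedProcess.isCausalStar_map_prodMk {μ : Measure (PathD N d)} [IsFiniteMeasure μ]
    {T : PathD N d → PathD N d} (hT : IsAdaptedProcess T) :
    IsCausalStar μ (μ.map fun x => (x, T x)) := by
  have hpair : Measurable fun x => (x, T x) := measurable_id.prodMk hT.measurable
  have hle (n : ℕ) : (Fn N d n).comap (Prod.fst : PathD N d × PathD N d → PathD N d) ≤
      Prod.instMeasurableSpace :=
    (MeasurableSpace.comap_mono (Fn_le N d n)).trans measurable_fst.comap_le
  have hgraph : ∀ᵐ z ∂(μ.map fun x => (x, T x)), z.2 = T z.1 :=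
    (ae_map_iff hpair.aemeasurable
      (measurableSet_eq_fun measurable_snd (hT.measurable.comp measurable_fst))).2
      (ae_of_all _ fun _ => rfl)
  refine ⟨?_, fun n => condIndepOn_of_forall_ae_eq (hle n) (hle N) ?_⟩
  · rw [Measure.map_map measurable_fst hpair]
    exact Measure.map_id
  · rintro _ ⟨S, hS, rfl⟩
    refine ⟨Prod.fst ⁻¹' (T ⁻¹' S), ⟨_, hT.measurable_Fn n hS, rfl⟩, eventuallyEq_set.2 ?_⟩
    filter_upwards [hgraph] with z hz
    simp only [Set.mem_preimage, hz]

end Causality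

/-! ### Integrability and the derivative under the integral -/

section Integration

variable {Ω E F : Type*} {m m₀ : MeasurableSpace Ω} {μ : Measure Ω} [NormedAddCommGroup E]
  [NormedAddCommGroup F] {d : ℕ} {p q : ℝ}

theorem memLp_ofReal_iff_integrable_norm_rpow {Y : Ω → E} (hp : 0 < p)
    (hY : AEStronglyMeasurable Y μ) :
    MemLp Y (ENNReal.ofReal p) μ ↔ Integrable (fun ω => ‖Y ω‖ ^ p) μ := by
  rw [← integrable_norm_rpow_iff hY (ENNReal.ofReal_pos.2 hp).ne' ENNReal.ofReal_ne_top,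
    ENNReal.toReal_ofReal hp.le]

theorem integrable_lpnorm_rpow {Y : Ω → Fin d → ℝ} (hp : 0 < p)
    (hY : MemLp Y (ENNReal.ofReal p) μ) : Integrable (fun ω => lpnorm p (Y ω) ^ p) μ := by
  simp only [lpnorm_rpow_eq_sum hp.ne']
  exact integrable_finsetSum _ fun j _ =>
    (memLp_ofReal_iff_integrable_norm_rpow hp (memLp_pi_iff.1 hY j).1).1 (memLp_pi_iff.1 hY j)

theorem integrable_dotProduct (hpq : p.HolderConjugate q) {Y Z : Ω → Fin d → ℝ}
    (hY : MemLp Y (ENNReal.ofReal p) μ) (hZ : MemLp Z (ENNReal.ofReal q) μ) :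
    Integrable (fun ω => Y ω ⬝ᵥ Z ω) μ := by
  have := hpq.ennrealOfReal
  exact integrable_finsetSum _ fun j _ =>
    (memLp_pi_iff.1 hY j).integrable_mul (memLp_pi_iff.1 hZ j)

theorem memLp_vmap_comp (hpq : p.HolderConjugate q) {Y : Ω → Fin d → ℝ}
    (hY : MemLp Y (ENNReal.ofReal q) μ) :
    MemLp (fun ω => vmap q (Y ω)) (ENNReal.ofReal p) μ := by
  refine memLp_pi_iff.2 fun j => ?_
  have hmeas : AEStronglyMeasurable (fun ω => vmap q (Y ω) j) μ :=
    (((measurable_pi_apply j).comp (measurable_vmap q)).comp_aemeasurable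
      hY.1.aemeasurable).aestronglyMeasurable
  have hYj := memLp_pi_iff.1 hY j
  rw [memLp_ofReal_iff_integrable_norm_rpow hpq.pos hmeas]
  simpa only [Real.norm_eq_abs, abs_vmap_apply_rpow hpq]
    using (memLp_ofReal_iff_integrable_norm_rpow hpq.symm.pos hYj.1).1 hYj

theorem memLp_deltaInv_comp {N : ℕ} {r : ℝ≥0∞} {Φ : Ω → PathD N d} (hΦ : MemLp Φ r μ) :
    MemLp (fun ω => DeltaInv (Φ ω)) r μ := by
  refine memLp_pi_iff.2 fun i => memLp_finsetSum _ fun k _ => ?_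
  split_ifs
  · exact memLp_pi_iff.1 hΦ k
  · exact MemLp.zero'

theorem memLp_of_norm_le_one_add_rpow [IsFiniteMeasure μ] {C : ℝ} (hpq : p.HolderConjugate q)
    {X : Ω → E} (hX : MemLp X (ENNReal.ofReal p) μ) {Y : Ω → F} (hY : AEStronglyMeasurable Y μ)
    (hYX : ∀ᵐ ω ∂μ, ‖Y ω‖ ≤ C * (1 + ‖X ω‖ ^ (p - 1))) : MemLp Y (ENNReal.ofReal q) μ := by
  have hpow := hX.norm_rpow_div (ENNReal.ofReal (p - 1))
  rw [← ENNReal.ofReal_div_of_pos hpq.sub_one_pos, ← hpq.conjugate_eq,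
    ENNReal.toReal_ofReal hpq.sub_one_pos.le] at hpow
  exact (((memLp_const (1 : ℝ)).add hpow).const_mul C).mono' hY hYX

theorem integral_dotProduct_condExp_right (hm : m ≤ m₀) [SigmaFinite (μ.trim hm)]
    {Y Z : Ω → Fin d → ℝ} (hY : StronglyMeasurable[m] Y)
    (hYZ : Integrable (fun ω => Y ω ⬝ᵥ Z ω) μ) (hZ : Integrable Z μ) :
    ∫ ω, Y ω ⬝ᵥ (μ[Z | m]) ω ∂μ = ∫ ω, Y ω ⬝ᵥ Z ω ∂μ := by
  let B : (Fin d → ℝ) →L[ℝ] (Fin d → ℝ) →L[ℝ] ℝ :=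
    (dotProductBilin ℝ ℝ : (Fin d → ℝ) →ₗ[ℝ] (Fin d → ℝ) →ₗ[ℝ] ℝ).toContinuousBilinearMap
  have hpull : μ[fun ω => Y ω ⬝ᵥ Z ω | m] =ᵐ[μ] fun ω => Y ω ⬝ᵥ (μ[Z | m]) ω :=
    condExp_bilin_of_stronglyMeasurable_left B hY hYZ hZ
  rw [← integral_congr_ae hpull, integral_condExp hm]

section Slope

variable [NormedSpace ℝ E] {f : E → ℝ} {K : ℝ}

theorem abs_sub_le_of_norm_fderiv_le_rpow (hf : Differentiable ℝ f) (hp : 1 ≤ p)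
    (hK : ∀ x, ‖fderiv ℝ f x‖ ≤ K * (1 + ‖x‖ ^ (p - 1))) {δ : ℝ} (hδ : |δ| ≤ 1) (x h : E) :
    |f (x + δ • h) - f x| ≤ |δ| * (2 * K * (1 + ‖x‖ + ‖h‖) ^ p) := by
  have hK0 : 0 ≤ K := nonneg_of_mul_nonneg_left ((norm_nonneg _).trans (hK 0)) (by positivity)
  have hp1 : 0 ≤ p - 1 := sub_nonneg.2 hp
  set R := 1 + ‖x‖ + ‖h‖ with hR
  have hxR : x ∈ Metric.closedBall (0 : E) R := by
    rw [mem_closedBall_zero_iff]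
    linarith [hR, norm_nonneg h]
  have hxhR : x + δ • h ∈ Metric.closedBall (0 : E) R := by
    rw [mem_closedBall_zero_iff]
    calc ‖x + δ • h‖ ≤ ‖x‖ + |δ| * ‖h‖ := by simpa [norm_smul] using norm_add_le x (δ • h)
      _ ≤ ‖x‖ + 1 * ‖h‖ := by gcongr
      _ ≤ R := by linarith [hR]
  have hderiv : ∀ y ∈ Metric.closedBall (0 : E) R, ‖fderiv ℝ f y‖ ≤ K * (2 * R ^ (p - 1)) := by
    intro y hy
    have hyR : ‖y‖ ≤ R := mem_closedBall_zero_iff.1 hy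
    have hone : 1 ≤ R ^ (p - 1) :=
      Real.one_le_rpow (by linarith [hR, norm_nonneg x, norm_nonneg h]) hp1
    have hpow : ‖y‖ ^ (p - 1) ≤ R ^ (p - 1) := by gcongr
    refine (hK y).trans ?_
    gcongr
    linarith
  calc |f (x + δ • h) - f x| ≤ K * (2 * R ^ (p - 1)) * ‖x + δ • h - x‖ :=
        (convex_closedBall (0 : E) R).norm_image_sub_le_of_norm_fderiv_le (𝕜 := ℝ)
          (fun y _ => hf y) hderiv hxR hxhR
    _ = K * (2 * R ^ (p - 1)) * (|δ| * ‖h‖) := by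
        rw [add_sub_cancel_left, norm_smul, Real.norm_eq_abs]
    _ ≤ K * (2 * R ^ (p - 1)) * (|δ| * R) := by
        gcongr
        linarith [hR, norm_nonneg x]
    _ = |δ| * (2 * K * (R ^ (p - 1) * R)) := by ring
    _ = |δ| * (2 * K * R ^ p) := by rw [← Real.rpow_add_one (by positivity), sub_add_cancel]

theorem tendsto_integral_sub_div [IsFiniteMeasure μ] (hf : Differentiable ℝ f) (hp : 1 ≤ p)
    (hK : ∀ x, ‖fderiv ℝ f x‖ ≤ K * (1 + ‖x‖ ^ (p - 1))) {X H : Ω → E}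
    (hX : MemLp X (ENNReal.ofReal p) μ) (hH : MemLp H (ENNReal.ofReal p) μ) :
    Tendsto (fun δ : ℝ => (∫ ω, (f (X ω + δ • H ω) - f (X ω)) ∂μ) / δ) (𝓝[≠] 0)
      (𝓝 (∫ ω, fderiv ℝ f (X ω) (H ω) ∂μ)) := by
  have hp0 : 0 < p := zero_lt_one.trans_le hp
  have hdom : Integrable (fun ω => 2 * K * (1 + ‖X ω‖ + ‖H ω‖) ^ p) μ := by
    have hsum := ((memLp_const (1 : ℝ)).add hX.norm).add hH.norm
    refine (((memLp_ofReal_iff_integrable_norm_rpow hp0 hsum.1).1 hsum).const_mul (2 * K)).congr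
      (ae_of_all _ fun ω => ?_)
    simp only [Pi.add_apply]
    rw [Real.norm_of_nonneg (by positivity)]
  simp_rw [← integral_div]
  refine tendsto_integral_filter_of_dominated_convergence _ (Eventually.of_forall fun δ => ?_) ?_
    hdom (ae_of_all _ fun ω => ?_)
  · have hdiff := (hf.continuous.comp_aestronglyMeasurable (hX.1.add (hH.1.const_smul δ))).sub
      (hf.continuous.comp_aestronglyMeasurable hX.1)
    exact (hdiff.aemeasurable.div_const δ).aestronglyMeasurable
  · have hsmall : ∀ᶠ δ : ℝ in 𝓝[≠] 0, |δ| ≤ 1 :=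
      ((continuous_abs.tendsto' 0 0 abs_zero).eventually_le_const one_pos).filter_mono
        nhdsWithin_le_nhds
    filter_upwards [hsmall, self_mem_nhdsWithin] with δ hδ hδ0
    refine ae_of_all _ fun ω => ?_
    rw [norm_div, Real.norm_eq_abs, Real.norm_eq_abs, div_le_iff₀' (abs_pos.2 hδ0)]
    exact abs_sub_le_of_norm_fderiv_le_rpow hf hp hK hδ (X ω) (H ω)
  · simpa only [div_eq_inv_mul, smul_eq_mul]
      using ((hf (X ω)).hasFDerivAt.hasLineDerivAt (H ω)).tendsto_slope_zero

end Slope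

end Integration

/-! ### Couplings obtained by shifting the path -/

section ShiftCoupling

/-- The law of `(X, X + c H(X))` when `X` has law `μ`. The paper's `π_δ` is the case
`H = Δ⁻¹ ∘ Φ` and `c = u δ`. -/
noncomputable def shiftCoupling {E : Type*} [AddCommGroup E] [Module ℝ E] [MeasurableSpace E]
    (μ : Measure E) (H : E → E) (c : ℝ) : Measure (E × E) :=
  μ.map fun x => (x, x + c • H x)

variable {E : Type*} [NormedAddCommGroup E] [NormedSpace ℝ E] [MeasurableSpace E] [BorelSpace E]
  [SecondCountableTopology E] {p : ℝ}

theorem aemeasurable_prodMk_add_smul {μ : Measure E} {H : E → E} (hH : AEMeasurable H μ) (c : ℝ) :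
    AEMeasurable (fun x => (x, x + c • H x)) μ :=
  aemeasurable_id.prodMk (aemeasurable_id.add (hH.const_smul c))

theorem tendsto_integral_shiftCoupling_div {μ : Measure E} [IsFiniteMeasure μ] {f : E → ℝ} {K : ℝ}
    (hf : Differentiable ℝ f) (hp : 1 ≤ p)
    (hK : ∀ x, ‖fderiv ℝ f x‖ ≤ K * (1 + ‖x‖ ^ (p - 1))) (hid : MemLp id (ENNReal.ofReal p) μ)
    {H : E → E} (hH : MemLp H (ENNReal.ofReal p) μ) (u : ℝ) :
    Tendsto (fun δ : ℝ => (∫ z, (f z.2 - f z.1) ∂shiftCoupling μ H (u * δ)) / δ) (𝓝[≠] 0)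
      (𝓝 (u * ∫ x, fderiv ℝ f x (H x) ∂μ)) := by
  have hlim := tendsto_integral_sub_div hf hp hK hid (hH.const_smul u)
  simp only [Pi.smul_apply, map_smul, smul_eq_mul, integral_const_mul, id_eq] at hlim
  refine hlim.congr fun δ => ?_
  have hfc := hf.continuous
  rw [shiftCoupling, integral_map (aemeasurable_prodMk_add_smul hH.1.aemeasurable _)
    (Continuous.aestronglyMeasurable (by fun_prop))]
  simp only [smul_smul, mul_comm δ u]

variable {N d : ℕ} {μ : Measure (PathD N d)} {Φ : PathD N d → PathD N d}

theorem IsAdaptedProcess.isProbabilityMeasure_shiftCoupling [IsProbabilityMeasure μ]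
    (hΦ : IsAdaptedProcess Φ) (c : ℝ) :
    IsProbabilityMeasure (shiftCoupling μ (fun x => DeltaInv (Φ x)) c) :=
  Measure.isProbabilityMeasure_map
    (measurable_id.prodMk (hΦ.add_smul_deltaInv c).measurable).aemeasurable

theorem costD_shiftCoupling_deltaInv (hp : 0 < p) (hΦ : MemLp Φ (ENNReal.ofReal p) μ) (c : ℝ) :
    costD p (shiftCoupling μ (fun x => DeltaInv (Φ x)) c) =
      |c| ^ p * ∑ n, ∫ x, lpnorm p (Φ x n) ^ p ∂μ := by
  rw [costD, shiftCoupling, integral_map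
    (aemeasurable_prodMk_add_smul (memLp_deltaInv_comp hΦ).1.aemeasurable c)
    (measurable_cN p).aestronglyMeasurable]
  simp_rw [cN_add_smul_deltaInv hp.ne']
  rw [integral_const_mul, integral_finsetSum _ fun n _ =>
    integrable_lpnorm_rpow hp (memLp_pi_iff.1 hΦ n)]

theorem IsAdaptedProcess.integral_fderiv_deltaInv [IsFiniteMeasure μ] {q : ℝ}
    (hΦ : IsAdaptedProcess Φ) (hpq : p.HolderConjugate q) (hΦp : MemLp Φ (ENNReal.ofReal p) μ)
    {f : PathD N d → ℝ} (hD : ∀ n, MemLp (Dn f n) (ENNReal.ofReal q) μ) :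
    ∫ x, fderiv ℝ f x (DeltaInv (Φ x)) ∂μ =
      ∑ n : Fin N, ∫ x, Φ x n ⬝ᵥ (μ[Dn f (n + 1) | Fn N d (n + 1)]) x ∂μ := by
  have hprod (n : Fin N) : Integrable (fun x => Φ x n ⬝ᵥ Dn f (n + 1) x) μ :=
    integrable_dotProduct hpq (memLp_pi_iff.1 hΦp n) (hD _)
  have hq : 1 ≤ ENNReal.ofReal q := ENNReal.one_le_ofReal.2 hpq.symm.lt.le
  simp_rw [fderiv_deltaInv]
  rw [integral_finsetSum _ fun n _ => hprod n]
  exact Finset.sum_congr rfl fun n _ => (integral_dotProduct_condExp_right (Fn_le N d _)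
    (hΦ n).stronglyMeasurable (hprod n) ((hD _).integrable hq)).symm

end ShiftCoupling

/-! ### The optimal direction -/

section OptimalDirection

variable {N d : ℕ} {p q : ℝ} {μ : Measure (PathD N d)} {f : PathD N d → ℝ}
  {Φ : PathD N d → PathD N d}

theorem optionalNorm_rpow (hq : q ≠ 0) (μ : Measure (PathD N d)) (f : PathD N d → ℝ) :
    optionalNorm q μ f ^ q =
      ∑ n : Fin N, ∫ x, lpnorm q ((μ[Dn f (n + 1) | Fn N d (n + 1)]) x) ^ q ∂μ := by
  rw [optionalNorm, ← Real.rpow_mul, one_div_mul_cancel hq, Real.rpow_one,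
    sum_Icc_one_eq_sum_fin]
  exact Finset.sum_nonneg fun n _ => integral_nonneg fun x =>
    Real.rpow_nonneg (lpnorm_nonneg _ _) _

theorem memLp_Dn_of_lpnorm_le [IsFiniteMeasure μ] {C : ℝ} {n : ℕ} (hpq : p.HolderConjugate q)
    (hid : MemLp id (ENNReal.ofReal p) μ)
    (hgrow : ∀ x, lpnorm q (Dn f n x) ≤ C * (1 + ‖x‖ ^ (p - 1))) :
    MemLp (Dn f n) (ENNReal.ofReal q) μ :=
  memLp_of_norm_le_one_add_rpow hpq hid (measurable_Dn f n).aestronglyMeasurable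
    (ae_of_all _ fun x => (norm_le_lpnorm hpq.symm.pos _).trans (hgrow x))

/-- `Φ` is an adapted version of the process `v(E_μ[𝔻_n f | F_n])`, the direction in which the
expectation of `f` grows fastest for a given transport cost. -/
structure IsOptimalDirection (q : ℝ) (μ : Measure (PathD N d)) (f : PathD N d → ℝ)
    (Φ : PathD N d → PathD N d) : Prop where
  isAdaptedProcess : IsAdaptedProcess Φ
  ae_eq (n : Fin N) : (fun x => Φ x n) =ᵐ[μ]
    fun x => vmap q ((μ[Dn f (n + 1) | Fn N d (n + 1)]) x)

theorem isOptimalDirection_vmap {g : ℕ → PathD N d → Fin d → ℝ}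
    (hgmeas : ∀ n : ℕ, 1 ≤ n → n ≤ N → Measurable[Fn N d n] (g n))
    (hgver : ∀ n : ℕ, 1 ≤ n → n ≤ N → g n =ᵐ[μ] μ[Dn f n | Fn N d n]) :
    IsOptimalDirection q μ f fun x i => vmap q (g (i + 1) x) where
  isAdaptedProcess n := (measurable_vmap q).comp (hgmeas _ (by omega) n.isLt)
  ae_eq n := (hgver _ (by omega) n.isLt).fun_comp (vmap q)

namespace IsOptimalDirection

theorem memLp (hΦ : IsOptimalDirection q μ f Φ) (hpq : p.HolderConjugate q)
    (hD : ∀ n, MemLp (Dn f n) (ENNReal.ofReal q) μ) : MemLp Φ (ENNReal.ofReal p) μ :=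
  memLp_pi_iff.2 fun n => (memLp_congr_ae (hΦ.ae_eq n)).2 <|
    memLp_vmap_comp hpq ((hD _).condExp (ENNReal.one_le_ofReal.2 hpq.symm.lt.le))

theorem costD_shiftCoupling (hΦ : IsOptimalDirection q μ f Φ) (hpq : p.HolderConjugate q)
    (hD : ∀ n, MemLp (Dn f n) (ENNReal.ofReal q) μ) (c : ℝ) :
    costD p (shiftCoupling μ (fun x => DeltaInv (Φ x)) c) = |c| ^ p * optionalNorm q μ f ^ q := by
  rw [costD_shiftCoupling_deltaInv hpq.pos (hΦ.memLp hpq hD), optionalNorm_rpow hpq.symm.ne_zero]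
  congr! 2 with n
  refine integral_congr_ae ?_
  filter_upwards [hΦ.ae_eq n] with x hx
  rw [hx, lpnorm_vmap_rpow hpq]

theorem integral_fderiv_deltaInv [IsFiniteMeasure μ] (hΦ : IsOptimalDirection q μ f Φ)
    (hpq : p.HolderConjugate q) (hD : ∀ n, MemLp (Dn f n) (ENNReal.ofReal q) μ) :
    ∫ x, fderiv ℝ f x (DeltaInv (Φ x)) ∂μ = optionalNorm q μ f ^ q := by
  rw [hΦ.isAdaptedProcess.integral_fderiv_deltaInv hpq (hΦ.memLp hpq hD) hD,
    optionalNorm_rpow hpq.symm.ne_zero]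
  refine Finset.sum_congr rfl fun n _ => integral_congr_ae ?_
  filter_upwards [hΦ.ae_eq n] with x hx
  rw [hx, vmap_dotProduct_self hpq.symm.ne_zero]

end IsOptimalDirection

end OptimalDirection

theorem statement_10_general {N d : ℕ} {p q : ℝ} (hpq : p.HolderConjugate q)
    (μ : Measure (PathD N d)) [IsProbabilityMeasure μ]
    (hmom : Integrable (fun x : PathD N d => ‖x‖ ^ p) μ)
    (f : PathD N d → ℝ) (hf : Differentiable ℝ f)
    (C : ℝ) (hgrow : ∀ n : ℕ, ∀ x : PathD N d,
      lpnorm q (Dn f n x) ≤ C * (1 + ‖x‖ ^ (p - 1)))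
    (g : ℕ → PathD N d → Fin d → ℝ)
    (hgmeas : ∀ n : ℕ, 1 ≤ n → n ≤ N → Measurable[Fn N d n] (g n))
    (hgver : ∀ n : ℕ, 1 ≤ n → n ≤ N → g n =ᵐ[μ] μ[Dn f n | Fn N d n])
    (u : ℝ) (πδ : ℝ → Measure (PathD N d × PathD N d))
    (hπδ : ∀ δ : ℝ, πδ δ =
      μ.map (fun x => (x, x + (u * δ) • DeltaInv (fun i : Fin N => vmap q (g (i + 1) x))))) :
    (∀ δ : ℝ, 0 < δ → IsProbabilityMeasure (πδ δ) ∧ IsCausalStar μ (πδ δ)) ∧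
    (∀ δ : ℝ, 0 < δ → costD p (πδ δ) = |u| ^ p * optionalNorm q μ f ^ q * δ ^ p) ∧
    Tendsto (fun δ : ℝ => (∫ z, (f z.2 - f z.1) ∂(πδ δ)) / δ) (𝓝[>] 0)
      (𝓝 (u * optionalNorm q μ f ^ q)) := by
  obtain rfl : πδ = fun δ => shiftCoupling μ _ (u * δ) := funext hπδ
  have hid : MemLp id (ENNReal.ofReal p) μ :=
    (memLp_ofReal_iff_integrable_norm_rpow hpq.pos aestronglyMeasurable_id).2 hmom
  have hD (n : ℕ) := memLp_Dn_of_lpnorm_le hpq hid (hgrow n)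
  have hΦ : IsOptimalDirection q μ f _ := isOptimalDirection_vmap hgmeas hgver
  have hadapted := hΦ.isAdaptedProcess
  refine ⟨fun δ _ => ⟨hadapted.isProbabilityMeasure_shiftCoupling _,
    (hadapted.add_smul_deltaInv _).isCausalStar_map_prodMk⟩, fun δ hδ => ?_, ?_⟩
  · rw [hΦ.costD_shiftCoupling hpq hD, abs_mul, abs_of_pos hδ,
      Real.mul_rpow (abs_nonneg u) hδ.le]
    ring
  · have hK (x : PathD N d) : ‖fderiv ℝ f x‖ ≤ N * d * 2 * C * (1 + ‖x‖ ^ (p - 1)) :=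
      (norm_fderiv_le_of_lpnorm_Dn_le hpq.symm.pos fun n => hgrow n x).trans_eq
        (mul_assoc _ _ _).symm
    rw [← hΦ.integral_fderiv_deltaInv hpq hD]
    exact (tendsto_integral_shiftCoupling_div hf hpq.lt.le hK hid
      (memLp_deltaInv_comp (hΦ.memLp hpq hD)) u).mono_left (nhdsGT_le_nhdsNE 0)

end

/-- The explicit first-order optimal perturbations: with
`Φ_n = v(E_μ[𝔻_n f(X)|F_n])`, `r = ‖ᵒ𝔻f‖_{L^q(μ)}`, `u > 0` and
`π_δ = (Id, Id + uδ Δ^{-1}∘Φ)_# μ`, every `π_δ` is a causal coupling with first marginal `μ`,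
`E_{π_δ}[c_N(X,Y)] = u^p r^q δ^p`, and `lim_{δ→0+} E_{π_δ}[f(Y) − f(X)]/δ = u r^q`. -/
theorem statement_10 {N d : ℕ} (p q : ℝ) (hp : 1 < p) (hq : q = p / (p - 1))
    (μ : Measure (PathD N d)) [IsProbabilityMeasure μ]
    (hmom : Integrable (fun x : PathD N d => ‖x‖ ^ p) μ)
    (f : PathD N d → ℝ) (hf : ContDiff ℝ 1 f)
    (C : ℝ) (hgrow : ∀ n : ℕ, ∀ x : PathD N d,
      lpnorm q (Dn f n x) ≤ C * (1 + ‖x‖ ^ (p - 1)))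
    (g : ℕ → PathD N d → Fin d → ℝ)
    (hgmeas : ∀ n : ℕ, 1 ≤ n → n ≤ N → Measurable[Fn N d n] (g n))
    (hgver : ∀ n : ℕ, 1 ≤ n → n ≤ N → g n =ᵐ[μ] μ[Dn f n | Fn N d n])
    (u : ℝ) (hu : 0 < u)
    (πδ : ℝ → Measure (PathD N d × PathD N d))
    (hπδ : ∀ δ : ℝ, πδ δ =
      μ.map (fun x => (x, x + (u * δ) • DeltaInv (fun i : Fin N => vmap q (g ((i : ℕ) + 1) x))))) :
    (∀ δ : ℝ, 0 < δ → IsProbabilityMeasure (πδ δ) ∧ IsCausalStar μ (πδ δ)) ∧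
    (∀ δ : ℝ, 0 < δ →
      costD p (πδ δ) = u ^ p * (optionalNorm q μ f) ^ q * δ ^ p) ∧
    Tendsto (fun δ : ℝ => (∫ z, (f z.2 - f z.1) ∂(πδ δ)) / δ)
      (nhdsWithin 0 (Set.Ioi 0))
      (nhds (u * (optionalNorm q μ f) ^ q)) := by
  simpa only [abs_of_pos hu] using statement_10_general
    ((Real.holderConjugate_iff_eq_conjExponent hp).2 hq) μ hmom f (hf.differentiable one_ne_zero)
    C hgrow g hgmeas hgver u πδ hπδ
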